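/- arXiv:2201.03695 — 4 statements merged into one kernel-verified Lean document; each statement's English description precedes it below -/
import Mathlib

section
/- Let G be a finite group and X a finite T0 G-space. Let P be the downward closure of a point in the second barycentric subdivision sd²(X). Then G·P = {g·u : g ∈ G, u ∈ P} is an open, G-categorical subset of sd²(X). -/
/-! ### Module A: equivariant TC / CC / LS for topological G-spaces -/

/-- The zigzag order `0 < 1 > 2 < 3 > ⋯` on natural numbers. -/
def zigzagLE (i j : ℕ) : Prop := i = j ∨ (i % 2 = 0 ∧ (j = i + 1 ∨ i = j + 1))

/-- The combinatorial interval `J m = {0, 1, …, m}`. -/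
def J (m : ℕ) : Type := Fin (m + 1)

namespace J

/-- The underlying natural number of a point of `J m`. -/
def val {m : ℕ} (i : J m) : ℕ := Fin.val i

/-- The initial point `0` of the combinatorial interval. -/
def zero (m : ℕ) : J m := (0 : Fin (m + 1))

/-- The final point `m` of the combinatorial interval. -/
def last (m : ℕ) : J m := Fin.last m

/-- The topology on `J m` whose open sets are the down-closed sets for the zigzag order. -/
instance (m : ℕ) : TopologicalSpace (J m) where
  IsOpen U := ∀ ⦃a⦄, a ∈ U → ∀ ⦃b⦄, zigzagLE (J.val b) (J.val a) → b ∈ U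
  isOpen_univ := fun a _ b _ => Set.mem_univ b
  isOpen_inter := fun s t hs ht a ha b hba => ⟨hs ha.1 hba, ht ha.2 hba⟩
  isOpen_sUnion := fun S hS a ha b hba => by
    obtain ⟨t, htS, hat⟩ := ha
    exact ⟨t, htS, hS t htS hat hba⟩

end J

section Equivariant

variable (G : Type*) [Group G]

/-- A set is `G`-invariant if it is stable under the action of every group element. -/
def GInvariant {α : Type*} [SMul G α] (U : Set α) : Prop :=
  ∀ g : G, ∀ x ∈ U, g • x ∈ U

variable (X : Type*) [TopologicalSpace X] [MulAction G X]

/-- `U ⊆ X × X` admits a continuous equivariant section of the free path fibration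
`π : X^I → X × X`, `α ↦ (α 0, α 1)`. -/
def EqNavigable (U : Set (X × X)) : Prop :=
  ∃ s : U → C(unitInterval, X), Continuous s ∧
    (∀ u : U, s u 0 = (u : X × X).1 ∧ s u 1 = (u : X × X).2) ∧
    (∀ (g : G) (u : U) (h : g • (u : X × X) ∈ U) (t : unitInterval),
      s ⟨g • (u : X × X), h⟩ t = g • s u t)

/-- The equivariant topological complexity: the least `k` such that `X × X` admits a cover by
`k` open invariant sets, each admitting a continuous equivariant section of the free path
fibration; `⊤` if there is no such cover. -/
noncomputable def eqTC : ℕ∞ :=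
  sInf {k : ℕ∞ | ∃ n : ℕ, k = n ∧ ∃ U : Fin n → Set (X × X),
    (∀ i, IsOpen (U i)) ∧ (∀ i, GInvariant G (U i)) ∧ (⋃ i, U i) = Set.univ ∧
    ∀ i, EqNavigable G X (U i)}

/-- `U ⊆ X × X` admits a continuous equivariant section of the combinatorial path fibration
`q_m : X^{J_m} → X × X`, `β ↦ (β 0, β m)`. -/
def EqNavigableJ (m : ℕ) (U : Set (X × X)) : Prop :=
  ∃ s : U → C(J m, X), Continuous s ∧
    (∀ u : U, s u (J.zero m) = (u : X × X).1 ∧ s u (J.last m) = (u : X × X).2) ∧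
    (∀ (g : G) (u : U) (h : g • (u : X × X) ∈ U) (t : J m),
      s ⟨g • (u : X × X), h⟩ t = g • s u t)

/-- The equivariant combinatorial complexity with paths of length `m`: the least `k` such that
`X × X` admits a cover by `k` open invariant sets, each admitting a continuous equivariant
section of the combinatorial path fibration `q_m`; `⊤` if there is no such cover. -/
noncomputable def eqCCm (m : ℕ) : ℕ∞ :=
  sInf {k : ℕ∞ | ∃ n : ℕ, k = n ∧ ∃ U : Fin n → Set (X × X),
    (∀ i, IsOpen (U i)) ∧ (∀ i, GInvariant G (U i)) ∧ (⋃ i, U i) = Set.univ ∧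
    ∀ i, EqNavigableJ G X m (U i)}

/-- The equivariant combinatorial complexity: the minimum over all `m ≥ 1` of `eqCCm`. -/
noncomputable def eqCC : ℕ∞ := ⨅ m : ℕ, eqCCm G X (m + 1)

/-- `U ⊆ X` is `G`-categorical for the orbit of `x₀`: the inclusion of `U` into `X` is
`G`-homotopic to a map taking values in the orbit of `x₀`. -/
def GCategoricalAt (U : Set X) (x₀ : X) : Prop :=
  ∃ F : U × unitInterval → X, Continuous F ∧
    (∀ u : U, F (u, 0) = (u : X)) ∧
    (∀ (g : G) (u : U) (h : g • (u : X) ∈ U) (t : unitInterval),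
      F (⟨g • (u : X), h⟩, t) = g • F (u, t)) ∧
    (∀ u : U, F (u, 1) ∈ MulAction.orbit G x₀)

/-- `U ⊆ X` is `G`-categorical: the inclusion of `U` into `X` is `G`-homotopic to a map taking
values in a single orbit. -/
def GCategorical (U : Set X) : Prop :=
  ∃ x₀ : X, GCategoricalAt G X U x₀

/-- The equivariant Lusternik–Schnirelmann category: the least `k` such that `X` is covered by
`k` open invariant `G`-categorical sets; `⊤` if there is no such cover. -/
noncomputable def eqLS : ℕ∞ :=
  sInf {k : ℕ∞ | ∃ n : ℕ, k = n ∧ ∃ U : Fin n → Set X,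
    (∀ i, IsOpen (U i)) ∧ (∀ i, GInvariant G (U i)) ∧ (⋃ i, U i) = Set.univ ∧
    ∀ i, GCategorical G X (U i)}

end Equivariant
/-! ### Module B: finite G-posets (= finite T₀ G-spaces) and barycentric subdivision -/

/-- The down-set (Alexandrov) topology on a preorder: open sets are the downwards-closed
sets.  Under the identification of finite `T₀` spaces with finite posets via the
specialization order, this recovers the topology of the finite space. -/
def downTop (P : Type*) [Preorder P] : TopologicalSpace P where
  IsOpen U := ∀ ⦃a⦄, a ∈ U → ∀ ⦃b⦄, b ≤ a → b ∈ U
  isOpen_univ := fun a _ b _ => Set.mem_univ b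
  isOpen_inter := fun s t hs ht a ha b hba => ⟨hs ha.1 hba, ht ha.2 hba⟩
  isOpen_sUnion := fun S hS a ha b hba => by
    obtain ⟨t, htS, hat⟩ := ha
    exact ⟨t, htS, hS t htS hat hba⟩

/-- A finite `T₀` `G`-space, encoded as a finite poset (via the specialization order)
with an action of `G` by monotone maps (equivalently, by homeomorphisms). -/
structure FinGPoset (G : Type) [Group G] : Type 1 where
  /-- the underlying set of points -/
  carrier : Type
  [fin : Fintype carrier]
  [po : PartialOrder carrier]
  /-- the action of `G` -/
  smul : G → carrier → carrier
  smul_one : ∀ x, smul 1 x = x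
  smul_mul : ∀ g h x, smul (g * h) x = smul g (smul h x)
  smul_mono : ∀ g : G, ∀ x y : carrier, x ≤ y → smul g x ≤ smul g y

attribute [instance] FinGPoset.fin FinGPoset.po

namespace FinGPoset

variable {G : Type} [Group G]

/-- The nonempty chains of a poset. -/
def chains (P : Type) [PartialOrder P] : Type :=
  {c : Finset P // c.Nonempty ∧ ∀ x ∈ c, ∀ y ∈ c, x ≤ y ∨ y ≤ x}

noncomputable instance (P : Type) [PartialOrder P] [Fintype P] : Fintype (chains P) := by
  classical exact Subtype.fintype _

instance (P : Type) [PartialOrder P] : PartialOrder (chains P) :=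
  Subtype.partialOrder _

/-- The barycentric subdivision of a finite `T₀` `G`-space: the poset of nonempty chains,
ordered by inclusion, with the induced `G`-action `g • {p₀ < ⋯ < pₙ} = {g•p₀ < ⋯ < g•pₙ}`. -/
noncomputable def sd (X : FinGPoset G) : FinGPoset G := by
  classical
  exact
  { carrier := chains X.carrier
    smul := fun g c => ⟨c.val.image (X.smul g), c.prop.1.image _, by
      intro x hx y hy
      rcases Finset.mem_image.mp hx with ⟨a, ha, rfl⟩
      rcases Finset.mem_image.mp hy with ⟨b, hb, rfl⟩
      rcases c.prop.2 a ha b hb with h | h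
      · exact Or.inl (X.smul_mono g _ _ h)
      · exact Or.inr (X.smul_mono g _ _ h)⟩
    smul_one := fun c => by
      apply Subtype.ext
      show c.val.image (X.smul 1) = c.val
      rw [Finset.image_congr (g := id) (fun x _ => X.smul_one x), Finset.image_id]
    smul_mul := fun g h c => by
      apply Subtype.ext
      show c.val.image (X.smul (g * h)) = (c.val.image (X.smul h)).image (X.smul g)
      rw [Finset.image_image]
      exact Finset.image_congr (fun x _ => X.smul_mul g h x)
    smul_mono := fun g c d hcd => by
      show c.val.image (X.smul g) ≤ d.val.image (X.smul g)
      exact Finset.image_subset_image hcd }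

/-- Iterated barycentric subdivision. -/
noncomputable def sdIter : ℕ → FinGPoset G → FinGPoset G
  | 0, X => X
  | (n + 1), X => (sdIter n X).sd

/-- The `G`-action on a finite `T₀` `G`-space, as a `MulAction`. -/
def mulAction (X : FinGPoset G) : MulAction G X.carrier where
  smul := X.smul
  one_smul := X.smul_one
  mul_smul := X.smul_mul

/-- The set of points of `X` fixed by every element of the subgroup `H`. -/
def fixedBy (X : FinGPoset G) (H : Subgroup G) : Set X.carrier :=
  {x | ∀ h ∈ H, X.smul h x = x}

/-- The set of points of `X` fixed by every element of `G`. -/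
def fixedSet (X : FinGPoset G) : Set X.carrier :=
  {x | ∀ g : G, X.smul g x = x}

/-- `X` is `G`-connected: for every subgroup `H ≤ G`, the fixed-point set `X^H`
(with the topology of the finite space) is path-connected. -/
def GConnected (X : FinGPoset G) : Prop :=
  letI : TopologicalSpace X.carrier := downTop X.carrier
  ∀ H : Subgroup G, ∀ a ∈ X.fixedBy H, ∀ b ∈ X.fixedBy H, JoinedIn (X.fixedBy H) a b

/-- A subset of a finite `T₀` `G`-space is open iff it is open in the down-set topology. -/
def IsOpenP (X : FinGPoset G) (U : Set X.carrier) : Prop :=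
  letI : TopologicalSpace X.carrier := downTop X.carrier
  IsOpen U

/-- The equivariant topological complexity of a finite `T₀` `G`-space. -/
noncomputable def TCG (X : FinGPoset G) : ℕ∞ :=
  letI : TopologicalSpace X.carrier := downTop X.carrier
  letI : MulAction G X.carrier := X.mulAction
  eqTC G X.carrier

/-- The equivariant Lusternik–Schnirelmann category of a finite `T₀` `G`-space. -/
noncomputable def LSG (X : FinGPoset G) : ℕ∞ :=
  letI : TopologicalSpace X.carrier := downTop X.carrier
  letI : MulAction G X.carrier := X.mulAction
  eqLS G X.carrier

/-- The saturation `G · U` of a subset `U` of a `G`-space. -/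
def satur (X : FinGPoset G) (U : Set X.carrier) : Set X.carrier :=
  {v | ∃ g : G, ∃ u ∈ U, v = X.smul g u}

/-- A subset of a finite `T₀` `G`-space is `G`-categorical: it is invariant and its
inclusion is `G`-homotopic to a map taking values in a single orbit. -/
def GCat (X : FinGPoset G) (U : Set X.carrier) : Prop :=
  letI : TopologicalSpace X.carrier := downTop X.carrier
  letI : MulAction G X.carrier := X.mulAction
  GInvariant G U ∧ GCategorical G X.carrier U

end FinGPoset

namespace FinGPoset

variable {G : Type} [Group G]

theorem aux_smul_inv (Q : FinGPoset G) (g : G) (x : Q.carrier) :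
    Q.smul g⁻¹ (Q.smul g x) = x := by
  rw [← Q.smul_mul, inv_mul_cancel, Q.smul_one]

theorem aux_smul_inv2 (Q : FinGPoset G) (g : G) (x : Q.carrier) :
    Q.smul g (Q.smul g⁻¹ x) = x := by
  rw [← Q.smul_mul, mul_inv_cancel, Q.smul_one]

theorem aux_le_inv (Q : FinGPoset G) (g : G) (x y : Q.carrier) (h : Q.smul g x ≤ y) :
    x ≤ Q.smul g⁻¹ y := by
  have := Q.smul_mono g⁻¹ _ _ h
  rwa [aux_smul_inv] at this

theorem aux_isLUB (Q : FinGPoset G) (g : G) (a b j : Q.carrier) (h : IsLUB {a, b} j) :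
    IsLUB {Q.smul g a, Q.smul g b} (Q.smul g j) := by
  have ha : a ≤ j := h.1 (by simp)
  have hb : b ≤ j := h.1 (by simp)
  constructor
  · rintro x (rfl | rfl)
    · exact Q.smul_mono g _ _ ha
    · exact Q.smul_mono g _ _ hb
  · intro y hy
    have h1 := aux_le_inv Q g _ _ (hy (Set.mem_insert _ _))
    have h2 := aux_le_inv Q g _ _ (hy (Set.mem_insert_of_mem _ rfl))
    have h3 : j ≤ Q.smul g⁻¹ y := h.2 (by
      rintro x (rfl | rfl)
      · exact h1
      · exact h2)
    have := Q.smul_mono g _ _ h3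
    rwa [aux_smul_inv2] at this

/-- Two-step homotopy `u ≤ m u ≥ r u`. -/
theorem aux_homotopy (Q : FinGPoset G) (U : Set Q.carrier) (m r : U → Q.carrier)
    (x₀ : Q.carrier)
    (hm : ∀ u v : U, u.1 ≤ v.1 → m u ≤ m v) (hr : ∀ u v : U, u.1 ≤ v.1 → r u ≤ r v)
    (hum : ∀ u : U, u.1 ≤ m u) (hrm : ∀ u, r u ≤ m u)
    (hme : ∀ (g : G) (u : U) (h : Q.smul g u.1 ∈ U), m ⟨Q.smul g u.1, h⟩ = Q.smul g (m u))
    (hre : ∀ (g : G) (u : U) (h : Q.smul g u.1 ∈ U), r ⟨Q.smul g u.1, h⟩ = Q.smul g (r u))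
    (hro : ∀ u, ∃ g : G, Q.smul g x₀ = r u) :
    letI : TopologicalSpace Q.carrier := downTop Q.carrier
    letI : MulAction G Q.carrier := Q.mulAction
    GCategorical G Q.carrier U := by
  letI : TopologicalSpace Q.carrier := downTop Q.carrier
  letI : MulAction G Q.carrier := Q.mulAction
  let F : U × unitInterval → Q.carrier := fun p =>
    if (p.2 : ℝ) < 1/2 then p.1.1 else if (p.2 : ℝ) = 1/2 then m p.1 else r p.1
  refine ⟨x₀, F, ?_, ?_, ?_, ?_⟩
  · rw [continuous_def]
    intro W hW
    have hW' : ∀ ⦃a⦄, a ∈ W → ∀ ⦃b⦄, b ≤ a → b ∈ W := hW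
    rw [isOpen_iff_forall_mem_open]
    rintro ⟨u, t⟩ hut
    have hD : IsOpen {v : U | v.1 ≤ u.1} := by
      have : IsOpen {q : Q.carrier | q ≤ u.1} := by
        intro a ha b hb
        exact le_trans hb ha
      exact this.preimage continuous_subtype_val
    have key : ∃ T : Set unitInterval, IsOpen T ∧ t ∈ T ∧
        ∀ v : U, v.1 ≤ u.1 → ∀ t' ∈ T, F (v, t') ≤ F (u, t) := by
      rcases lt_trichotomy (t : ℝ) (1/2) with h | h | h
      · refine ⟨{t' | (t' : ℝ) < 1/2}, isOpen_lt continuous_subtype_val continuous_const, h, ?_⟩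
        intro v hv t' ht'
        have ht'' : (t' : ℝ) < 1/2 := ht'
        simp only [F, if_pos h, if_pos ht'']
        exact hv
      · refine ⟨Set.univ, isOpen_univ, trivial, ?_⟩
        intro v hv t' _
        have e : F (u, t) = m u := by simp [F, h]
        rw [e]
        simp only [F]
        split_ifs
        · exact hv.trans (hum u)
        · exact hm _ _ hv
        · exact (hrm v).trans (hm _ _ hv)
      · refine ⟨{t' | (1/2 : ℝ) < t'}, isOpen_lt continuous_const continuous_subtype_val, h, ?_⟩
        intro v hv t' ht'
        have ht'' : (1/2 : ℝ) < t' := ht'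
        simp only [F, if_neg h.not_gt, if_neg h.ne', if_neg ht''.not_gt, if_neg ht''.ne']
        exact hr _ _ hv
    obtain ⟨T, hT, htT, hle⟩ := key
    refine ⟨{v : U | v.1 ≤ u.1} ×ˢ T, ?_, hD.prod hT, ⟨le_refl u.1, htT⟩⟩
    rintro ⟨v, t'⟩ ⟨hv, ht'⟩
    exact hW' hut (hle v hv t' ht')
  · intro u
    simp [F]
  · intro g u h t
    show F (⟨Q.smul g u.1, h⟩, t) = Q.smul g (F (u, t))
    simp only [F]
    split_ifs
    · rfl
    · exact hme g u h
    · exact hre g u h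
  · intro u
    have e : F (u, 1) = r u := by
      simp only [F]
      norm_num
    rw [e]
    obtain ⟨g, hg⟩ := hro u
    exact ⟨g, hg⟩

theorem aux_general (Q : FinGPoset G) (s c : Q.carrier) (hc : c ≤ s)
    (hwell : ∀ (g h : G) (u : Q.carrier), u ≤ Q.smul g s → u ≤ Q.smul h s →
      Q.smul g c = Q.smul h c)
    (hlub : ∀ a b t : Q.carrier, a ≤ t → b ≤ t → ∃ j, IsLUB {a, b} j) :
    Q.IsOpenP (Q.satur {u | u ≤ s}) ∧ Q.GCat (Q.satur {u | u ≤ s}) := by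
  have hmem : ∀ v, v ∈ Q.satur {u | u ≤ s} ↔ ∃ g : G, v ≤ Q.smul g s := by
    intro v
    constructor
    · rintro ⟨g, u, hu, rfl⟩
      exact ⟨g, Q.smul_mono g _ _ hu⟩
    · rintro ⟨g, hg⟩
      refine ⟨g, Q.smul g⁻¹ v, ?_, (aux_smul_inv2 Q g v).symm⟩
      have := Q.smul_mono g⁻¹ _ _ hg
      rwa [aux_smul_inv] at this
  generalize Q.satur {u | u ≤ s} = U at hmem
  refine ⟨?_, ?_, ?_⟩
  · intro a ha b hb
    obtain ⟨g, hg⟩ := (hmem a).1 ha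
    exact (hmem b).2 ⟨g, hb.trans hg⟩
  · intro g x hx
    obtain ⟨h, hh⟩ := (hmem x).1 hx
    refine (hmem _).2 ⟨g * h, ?_⟩
    rw [Q.smul_mul]
    exact Q.smul_mono g _ _ hh
  · have hγ : ∀ u : U, ∃ g : G, u.1 ≤ Q.smul g s := fun u => (hmem _).1 u.2
    choose γ hγ using hγ
    have hj : ∀ u : U, ∃ j, IsLUB {u.1, Q.smul (γ u) c} j := fun u =>
      hlub _ _ _ (hγ u) (Q.smul_mono _ _ _ hc)
    choose m hm using hj
    have hr : ∀ u v : U, u.1 ≤ v.1 → Q.smul (γ u) c = Q.smul (γ v) c := fun u v huv =>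
      hwell _ _ u.1 (hγ u) (huv.trans (hγ v))
    have hum : ∀ u : U, u.1 ≤ m u := fun u => (hm u).1 (Set.mem_insert _ _)
    have hrm : ∀ u : U, Q.smul (γ u) c ≤ m u :=
      fun u => (hm u).1 (Set.mem_insert_of_mem _ rfl)
    have hre : ∀ (g : G) (u : U) (h : Q.smul g u.1 ∈ U),
        Q.smul (γ ⟨Q.smul g u.1, h⟩) c = Q.smul g (Q.smul (γ u) c) := by
      intro g u h
      rw [← Q.smul_mul]
      refine hwell _ _ (Q.smul g u.1) (hγ ⟨Q.smul g u.1, h⟩) ?_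
      rw [Q.smul_mul]
      exact Q.smul_mono g _ _ (hγ u)
    refine aux_homotopy Q U m (fun u => Q.smul (γ u) c) c ?_ (fun u v h => (hr u v h).le)
      hum hrm ?_ hre (fun u => ⟨γ u, rfl⟩)
    · intro u v huv
      refine (hm u).2 ?_
      rintro x (rfl | rfl)
      · exact huv.trans (hum v)
      · exact (hr u v huv).le.trans (hrm v)
    · intro g u h
      have h1 := hm ⟨Q.smul g u.1, h⟩
      rw [hre] at h1
      exact h1.unique (aux_isLUB Q g _ _ _ (hm u))

theorem aux_mem_sd (X : FinGPoset G) (g : G) (c : X.sd.carrier) (y : X.carrier) :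
    y ∈ (X.sd.smul g c).val ↔ ∃ x ∈ c.val, X.smul g x = y := by
  classical
  exact Finset.mem_image

theorem aux_smul_inj (X : FinGPoset G) (g : G) : Function.Injective (X.smul g) :=
  Function.LeftInverse.injective (aux_smul_inv X g)

theorem aux_card_sd (X : FinGPoset G) (g : G) (c : X.sd.carrier) :
    (X.sd.smul g c).val.card = c.val.card := by
  classical
  exact Finset.card_image_of_injective _ (aux_smul_inj X g)

theorem aux_le_pow (X : FinGPoset G) (k : G) (x : X.carrier) (h : x ≤ X.smul k x) (n : ℕ) :
    X.smul k x ≤ X.smul (k ^ (n + 1)) x := by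
  induction n with
  | zero => simp
  | succ n ih =>
    rw [pow_succ', X.smul_mul]
    exact X.smul_mono k _ _ (h.trans ih)

theorem aux_pow_le (X : FinGPoset G) (k : G) (x : X.carrier) (h : X.smul k x ≤ x) (n : ℕ) :
    X.smul (k ^ (n + 1)) x ≤ X.smul k x := by
  induction n with
  | zero => simp
  | succ n ih =>
    rw [pow_succ', X.smul_mul]
    exact X.smul_mono k _ _ (ih.trans h)

theorem aux_fix [Finite G] (X : FinGPoset G) (k : G) (x : X.carrier)
    (h : X.smul k x ≤ x ∨ x ≤ X.smul k x) : X.smul k x = x := by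
  obtain ⟨n, hn⟩ : ∃ n, orderOf k = n + 1 :=
    Nat.exists_eq_succ_of_ne_zero (orderOf_pos k).ne'
  have hp : k ^ (n + 1) = 1 := by rw [← hn]; exact pow_orderOf_eq_one k
  rcases h with h | h
  · have := aux_pow_le X k x h n
    rw [hp, X.smul_one] at this
    exact le_antisymm h this
  · have := aux_le_pow X k x h n
    rw [hp, X.smul_one] at this
    exact le_antisymm this h

theorem aux_fix_sub [Finite G] (X : FinGPoset G) (k : G) (σ τ : X.sd.carrier)
    (hστ : σ ≤ τ) (hk : X.sd.smul k τ = τ) : X.sd.smul k σ = σ := by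
  have hp : ∀ x ∈ σ.val, X.smul k x = x := by
    intro x hx
    have hxt : x ∈ τ.val := hστ hx
    have hkx : X.smul k x ∈ τ.val := by
      rw [← hk]
      exact (aux_mem_sd X k τ _).2 ⟨x, hxt, rfl⟩
    exact aux_fix X k x (τ.prop.2 _ hkx _ hxt)
  apply Subtype.ext
  ext y
  rw [aux_mem_sd]
  constructor
  · rintro ⟨x, hx, rfl⟩
    rw [hp x hx]
    exact hx
  · intro hy
    exact ⟨y, hy, hp y hy⟩

theorem aux_lub_sd (Y : FinGPoset G) (a b t : Y.sd.carrier) (ha : a ≤ t) (hb : b ≤ t) :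
    ∃ j, IsLUB {a, b} j := by
  classical
  have hsub : ∀ x ∈ a.val ∪ b.val, x ∈ t.val := by
    intro x hx
    rcases Finset.mem_union.1 hx with h | h
    · exact ha h
    · exact hb h
  let j : chains Y.carrier := ⟨a.val ∪ b.val, a.prop.1.mono Finset.subset_union_left,
    fun x hx y hy => t.prop.2 x (hsub x hx) y (hsub y hy)⟩
  refine ⟨j, ?_, ?_⟩
  · rintro x (rfl | rfl)
    · exact Finset.subset_union_left (s₁ := x.val)
    · exact Finset.subset_union_right (s₂ := x.val)
  · intro y hy
    have h1 : a.val ⊆ y.val := hy (Set.mem_insert _ _)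
    have h2 : b.val ⊆ y.val := hy (Set.mem_insert_of_mem _ rfl)
    exact Finset.union_subset h1 h2

theorem aux_main [Finite G] (X : FinGPoset G) (s : X.sd.sd.carrier) :
    X.sd.sd.IsOpenP (X.sd.sd.satur {u | u ≤ s}) ∧
      X.sd.sd.GCat (X.sd.sd.satur {u | u ≤ s}) := by
  obtain ⟨σ, hσ⟩ := Finset.exists_minimal s.prop.1
  have hmin : ∀ τ ∈ s.val, σ ≤ τ := by
    intro τ hτ
    rcases s.prop.2 σ hσ.1 τ hτ with h | h
    · exact h
    · exact hσ.2 hτ h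
  let c : chains X.sd.carrier := ⟨{σ}, Finset.singleton_nonempty σ, by
    intro x hx y hy
    rw [Finset.mem_singleton] at hx hy
    rw [hx, hy]
    exact Or.inl le_rfl⟩
  have hc : ∀ y, y ∈ c.val ↔ y = σ := fun y => Finset.mem_singleton
  refine aux_general X.sd.sd s c ?_ ?_ (aux_lub_sd X.sd)
  · exact Finset.singleton_subset_iff.2 hσ.1
  · intro g h u hg hh
    obtain ⟨ρ, hρ⟩ := u.prop.1
    obtain ⟨τ, hτ, h1⟩ := (aux_mem_sd X.sd g s ρ).1 (hg hρ)
    obtain ⟨τ', hτ', h2⟩ := (aux_mem_sd X.sd h s ρ).1 (hh hρ)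
    have hcard : τ.val.card = τ'.val.card := by
      rw [← aux_card_sd X g τ, ← aux_card_sd X h τ', h1, h2]
    have hττ : τ = τ' := by
      rcases s.prop.2 τ hτ τ' hτ' with hl | hl
      · exact Subtype.ext (Finset.eq_of_subset_of_card_le hl hcard.ge)
      · exact Subtype.ext (Finset.eq_of_subset_of_card_le hl hcard.le).symm
    subst hττ
    have hk : X.sd.smul (g⁻¹ * h) τ = τ := by
      rw [X.sd.smul_mul, h2, ← h1, aux_smul_inv]
    have hkσ := aux_fix_sub X (g⁻¹ * h) σ τ (hmin τ hτ) hk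
    have hgh : X.sd.smul g σ = X.sd.smul h σ := by
      conv_lhs => rw [← hkσ]
      rw [← X.sd.smul_mul, mul_inv_cancel_left]
    apply Subtype.ext
    ext y
    refine (aux_mem_sd X.sd g c y).trans (Iff.trans ?_ (aux_mem_sd X.sd h c y).symm)
    constructor
    · rintro ⟨x, hx, rfl⟩
      rw [hc] at hx
      exact ⟨σ, (hc σ).2 rfl, by rw [hx, hgh]⟩
    · rintro ⟨x, hx, rfl⟩
      rw [hc] at hx
      exact ⟨σ, (hc σ).2 rfl, by rw [hx, hgh]⟩

end FinGPoset

/-- Let `G` be a finite group, `X` a finite `T₀` `G`-space, and `P` the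
downward closure of a point `s` in the second barycentric subdivision `sd²(X)`. Then
`G·P = {g • u : g ∈ G, u ∈ P}` is an open, `G`-categorical subset of `sd²(X)`. -/
theorem satur_downClosure_isOpen_gcat (G : Type) [Group G] [Finite G] (X : FinGPoset G)
    (s : (FinGPoset.sdIter 2 X).carrier) :
    (FinGPoset.sdIter 2 X).IsOpenP ((FinGPoset.sdIter 2 X).satur {u | u ≤ s}) ∧
      (FinGPoset.sdIter 2 X).GCat ((FinGPoset.sdIter 2 X).satur {u | u ≤ s}) := by
  exact FinGPoset.aux_main X s
end

section
/- Let G be a finite group and X a finite T0 G-space. Then the equivariant Lusternik–Schnirelmann category of sd^n(X) is finite for every n ≥ 2: LS_G(sd^n(X)) < ∞. -/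
namespace FinGPoset

variable {G : Type} [Group G]

/-- underlying finset of a point of the subdivision -/
def el {X : FinGPoset G} (c : X.sd.carrier) : Finset X.carrier := Subtype.val (p := fun c : Finset X.carrier => c.Nonempty ∧ ∀ x ∈ c, ∀ y ∈ c, x ≤ y ∨ y ≤ x) c

theorem el_ext {X : FinGPoset G} {c d : X.sd.carrier} (h : ∀ x, x ∈ el c ↔ x ∈ el d) : c = d :=
  Subtype.ext (Finset.ext h)

theorem el_le {X : FinGPoset G} {c d : X.sd.carrier} : c ≤ d ↔ ∀ x, x ∈ el c → x ∈ el d :=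
  Iff.rfl

theorem el_nonempty {X : FinGPoset G} (c : X.sd.carrier) : ∃ x, x ∈ el c := c.2.1

theorem el_chain {X : FinGPoset G} (c : X.sd.carrier) {x y : X.carrier} (hx : x ∈ el c)
    (hy : y ∈ el c) : x ≤ y ∨ y ≤ x := c.2.2 x hx y hy

theorem mem_smul {X : FinGPoset G} (g : G) (c : X.sd.carrier) (y : X.carrier) :
    y ∈ el (X.sd.smul g c) ↔ ∃ x ∈ el c, X.smul g x = y := by
  classical
  exact Finset.mem_image

theorem exists_sd {X : FinGPoset G} (S : Set X.carrier) (hne : S.Nonempty)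
    (hS : ∀ x ∈ S, ∀ y ∈ S, x ≤ y ∨ y ≤ x) : ∃ c : X.sd.carrier, ∀ x, x ∈ el c ↔ x ∈ S := by
  classical
  refine ⟨(⟨Finset.univ.filter (· ∈ S), ?_, ?_⟩ : chains X.carrier), ?_⟩
  · obtain ⟨x, hx⟩ := hne
    exact ⟨x, by simpa using hx⟩
  · intro x hx y hy
    exact hS x (by simpa using hx) y (by simpa using hy)
  · intro x
    show x ∈ Finset.univ.filter (· ∈ S) ↔ _
    simp

theorem smul_inv (X : FinGPoset G) (g : G) (x : X.carrier) : X.smul g⁻¹ (X.smul g x) = x := by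
  rw [← X.smul_mul, inv_mul_cancel, X.smul_one]

theorem smul_inv' (X : FinGPoset G) (g : G) (x : X.carrier) : X.smul g (X.smul g⁻¹ x) = x := by
  rw [← X.smul_mul, mul_inv_cancel, X.smul_one]

theorem fix_of_le [Finite G] (X : FinGPoset G) (g : G) (x : X.carrier) (h : x ≤ X.smul g x) :
    X.smul g x = x := by
  have h1 : ∀ n : ℕ, X.smul g x ≤ X.smul (g ^ (n + 1)) x := by
    intro n
    induction n with
    | zero => simp
    | succ n ih =>
      rw [pow_succ', X.smul_mul]
      exact X.smul_mono _ _ _ (h.trans ih)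
  have h2 := h1 (orderOf g - 1)
  rw [Nat.sub_add_cancel (orderOf_pos g), pow_orderOf_eq_one, X.smul_one] at h2
  exact le_antisymm h2 h

theorem fix_of_comp [Finite G] (X : FinGPoset G) (g : G) (x : X.carrier)
    (h : x ≤ X.smul g x ∨ X.smul g x ≤ x) : X.smul g x = x := by
  rcases h with h | h
  · exact fix_of_le X g x h
  · have := fix_of_le X g⁻¹ x (by simpa [smul_inv] using X.smul_mono g⁻¹ _ _ h)
    conv_lhs => rw [← this]
    exact smul_inv' X g x

theorem fix_below [Finite G] (W : FinGPoset G) (g : G) (s t : W.sd.carrier) (hst : s ≤ t)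
    (h : W.sd.smul g t = t) : W.sd.smul g s = s := by
  have key : ∀ x ∈ el t, W.smul g x = x := by
    intro x hx
    have : W.smul g x ∈ el t := by
      rw [← h, mem_smul]; exact ⟨x, hx, rfl⟩
    exact fix_of_comp W g x (el_chain t hx this)
  apply el_ext
  intro y
  rw [mem_smul]
  constructor
  · rintro ⟨x, hx, rfl⟩
    rwa [key x (hst hx)]
  · intro hy
    exact ⟨y, hy, key y (hst hy)⟩

theorem key_eq [Finite G] (W : FinGPoset G) (c d : W.sd.sd.carrier) (s : W.sd.carrier)
    (hs : ∀ t ∈ el c, s ≤ t) (g h : G) (hg : d ≤ W.sd.sd.smul g c) (hh : d ≤ W.sd.sd.smul h c) :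
    W.sd.smul g s = W.sd.smul h s := by
  obtain ⟨t, ht⟩ := el_nonempty d
  obtain ⟨a, ha, hat⟩ := (mem_smul _ _ _).1 (el_le.1 hg t ht)
  obtain ⟨b, hb, hbt⟩ := (mem_smul _ _ _).1 (el_le.1 hh t ht)
  have e : W.sd.smul (h⁻¹ * g) a = b := by
    rw [W.sd.smul_mul, hat, ← hbt, smul_inv]
  have e2 : W.sd.smul (h⁻¹ * g) a = a := by
    apply fix_of_comp
    rw [e]
    exact el_chain c ha hb
  have e3 := fix_below W (h⁻¹ * g) s a (hs a ha) e2
  rw [W.sd.smul_mul] at e3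
  rw [← smul_inv' W.sd h (W.sd.smul g s), e3]

theorem gcat_of (Y : FinGPoset G) (U : Set Y.carrier) (x₀ : Y.carrier) (f r : U → Y.carrier)
    (hf : Monotone f) (hr : Monotone r) (hxf : ∀ u : U, u.1 ≤ f u) (hrf : ∀ u, r u ≤ f u)
    (ef : ∀ (g : G) (u : U) (h : Y.smul g u.1 ∈ U), f ⟨Y.smul g u.1, h⟩ = Y.smul g (f u))
    (er : ∀ (g : G) (u : U) (h : Y.smul g u.1 ∈ U), r ⟨Y.smul g u.1, h⟩ = Y.smul g (r u))
    (ro : ∀ u, ∃ g : G, Y.smul g x₀ = r u) :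
    letI : TopologicalSpace Y.carrier := downTop Y.carrier
    letI : MulAction G Y.carrier := Y.mulAction
    GCategorical G Y.carrier U := by
  letI : TopologicalSpace Y.carrier := downTop Y.carrier
  letI : MulAction G Y.carrier := Y.mulAction
  refine ⟨x₀, fun p => if (p.2 : ℝ) < 1/2 then p.1.1 else if (p.2 : ℝ) = 1/2 then f p.1 else r p.1,
    ?_, ?_, ?_, ?_⟩
  · rw [continuous_def]
    intro V hV
    rw [isOpen_iff_mem_nhds]
    rintro ⟨u, t⟩ hu
    have hD : {v : U | v ≤ u} ∈ nhds u := by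
      refine IsOpen.mem_nhds ?_ le_rfl
      refine ⟨{y | y ≤ u.1}, fun a ha b hb => le_trans hb ha, rfl⟩
    have hc : Continuous (fun t : unitInterval => (t : ℝ)) := continuous_subtype_val
    simp only [Set.mem_preimage] at hu
    by_cases h1 : (t : ℝ) < 1/2
    · rw [if_pos h1] at hu
      have hN : {t' : unitInterval | (t' : ℝ) < 1/2} ∈ nhds t :=
        (isOpen_lt hc continuous_const).mem_nhds h1
      filter_upwards [prod_mem_nhds hD hN]
      rintro ⟨v, t'⟩ ⟨hv, ht'⟩
      simp only [Set.mem_setOf_eq] at hv ht'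
      simp only [Set.mem_preimage, if_pos ht']
      exact hV hu hv
    · by_cases h2 : (t : ℝ) = 1/2
      · rw [if_neg h1, if_pos h2] at hu
        filter_upwards [prod_mem_nhds hD Filter.univ_mem]
        rintro ⟨v, t'⟩ ⟨hv, -⟩
        simp only [Set.mem_setOf_eq] at hv
        simp only [Set.mem_preimage]
        have := hf hv
        split_ifs
        · exact hV hu ((hxf v).trans this)
        · exact hV hu this
        · exact hV hu ((hrf v).trans this)
      · rw [if_neg h1, if_neg h2] at hu
        have h3 : 1/2 < (t : ℝ) := lt_of_le_of_ne (not_lt.1 h1) (Ne.symm h2)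
        have hN : {t' : unitInterval | 1/2 < (t' : ℝ)} ∈ nhds t :=
          (isOpen_lt continuous_const hc).mem_nhds h3
        filter_upwards [prod_mem_nhds hD hN]
        rintro ⟨v, t'⟩ ⟨hv, ht'⟩
        simp only [Set.mem_setOf_eq] at hv ht'
        simp only [Set.mem_preimage, if_neg ht'.le.not_gt, if_neg ht'.ne']
        exact hV hu (hr hv)
  · intro u
    simp
  · intro g u h t
    dsimp only
    split_ifs
    · rfl
    · exact ef g u h
    · exact er g u h
  · intro u
    obtain ⟨g, hg⟩ := ro u
    refine ⟨g, ?_⟩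
    have : ¬ ((1 : ℝ) < 1/2) := by norm_num
    have h' : ¬ ((1 : ℝ) = 1/2) := by norm_num
    simp only [Set.Icc.coe_one, if_neg this, if_neg h']
    exact hg

theorem smul_mono_iff (Y : FinGPoset G) (g : G) {a b : Y.carrier} (h : a ≤ b) :
    Y.smul g a ≤ Y.smul g b := Y.smul_mono g a b h

theorem main_cat [Finite G] (W : FinGPoset G) (c : W.sd.sd.carrier) :
    letI : TopologicalSpace W.sd.sd.carrier := downTop W.sd.sd.carrier
    letI : MulAction G W.sd.sd.carrier := W.sd.sd.mulAction
    GCategorical G W.sd.sd.carrier {d | ∃ g, d ≤ W.sd.sd.smul g c} := by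
  obtain ⟨s, hsc, hs⟩ : ∃ s ∈ el c, ∀ t ∈ el c, s ≤ t := by
    obtain ⟨s, hs⟩ := (el c).exists_minimal (el_nonempty c)
    refine ⟨s, hs.1, fun t ht => ?_⟩
    rcases el_chain c hs.1 ht with h | h
    · exact h
    · exact hs.2 ht h
  obtain ⟨x₀, hx₀⟩ := exists_sd (X := W.sd) {s} (Set.singleton_nonempty s) (by
    rintro x rfl y rfl; exact Or.inl le_rfl)
  let U : Set W.sd.sd.carrier := {d | ∃ g, d ≤ W.sd.sd.smul g c}
  choose γ hγ using (fun u : U => u.2)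
  have hind : ∀ (u : U) (g : G), u.1 ≤ W.sd.sd.smul g c → W.sd.smul (γ u) s = W.sd.smul g s :=
    fun u g hg => key_eq W c u.1 s hs _ _ (hγ u) hg
  have hmem : ∀ u : U, W.sd.smul (γ u) s ∈ el (W.sd.sd.smul (γ u) c) :=
    fun u => (mem_smul _ _ _).2 ⟨s, hsc, rfl⟩
  have hex : ∀ u : U, ∃ e : W.sd.sd.carrier, ∀ x, x ∈ el e ↔ x ∈ {x | x ∈ el u.1 ∨ x = W.sd.smul (γ u) s} := by
    intro u
    apply exists_sd
    · exact ⟨_, Or.inr rfl⟩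
    · have : ∀ x, x ∈ el u.1 ∨ x = W.sd.smul (γ u) s → x ∈ el (W.sd.sd.smul (γ u) c) := by
        rintro x (h | rfl)
        · exact el_le.1 (hγ u) x h
        · exact hmem u
      intro x hx y hy
      exact el_chain _ (this x hx) (this y hy)
  choose f hf using hex
  have hmono : ∀ u v : U, u ≤ v → W.sd.smul (γ u) s = W.sd.smul (γ v) s :=
    fun u v huv => hind u _ (le_trans huv (hγ v))
  have heq : ∀ (g : G) (u : U) (h : W.sd.sd.smul g u.1 ∈ U),
      W.sd.smul (γ ⟨W.sd.sd.smul g u.1, h⟩) s = W.sd.smul g (W.sd.smul (γ u) s) := by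
    intro g u h
    rw [← W.sd.smul_mul]
    apply hind
    rw [W.sd.sd.smul_mul]
    exact W.sd.sd.smul_mono _ _ _ (hγ u)
  have hr : ∀ (u : U) x, x ∈ el (W.sd.sd.smul (γ u) x₀) ↔ x = W.sd.smul (γ u) s := by
    intro u x
    rw [mem_smul]
    constructor
    · rintro ⟨y, hy, rfl⟩
      rw [(hx₀ y).1 hy]
    · rintro rfl
      exact ⟨s, (hx₀ s).2 rfl, rfl⟩
  refine gcat_of W.sd.sd U x₀ f (fun u => W.sd.sd.smul (γ u) x₀) ?_ ?_ ?_ ?_ ?_ ?_ ?_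
  · intro u v huv
    rw [el_le]
    intro x hx
    rcases (hf u x).1 hx with h | h
    · exact (hf v x).2 (Or.inl (el_le.1 huv x h))
    · exact (hf v x).2 (Or.inr (h.trans (hmono u v huv)))
  · intro u v huv
    rw [el_le]
    intro x hx
    rw [hr] at hx ⊢
    exact hx.trans (hmono u v huv)
  · intro u
    rw [el_le]
    intro x hx
    exact (hf u x).2 (Or.inl hx)
  · intro u
    rw [el_le]
    intro x hx
    exact (hf u x).2 (Or.inr ((hr u x).1 hx))
  · intro g u h
    apply el_ext
    intro x
    rw [hf, mem_smul]
    simp only [Set.mem_setOf_eq, heq, mem_smul]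
    constructor
    · rintro (⟨y, hy, rfl⟩ | rfl)
      · exact ⟨y, (hf u y).2 (Or.inl hy), rfl⟩
      · exact ⟨_, (hf u _).2 (Or.inr rfl), rfl⟩
    · rintro ⟨y, hy, rfl⟩
      rcases (hf u y).1 hy with h | h
      · exact Or.inl ⟨y, h, rfl⟩
      · right; rw [h]
  · intro g u h
    apply el_ext
    intro x
    rw [hr, heq, mem_smul]
    constructor
    · rintro rfl
      exact ⟨_, (hr u _).2 rfl, rfl⟩
    · rintro ⟨y, hy, rfl⟩
      rw [(hr u y).1 hy]
  · intro u
    exact ⟨γ u, rfl⟩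

theorem LSG_sd_sd [Finite G] (W : FinGPoset G) : W.sd.sd.LSG < ⊤ := by
  letI : TopologicalSpace W.sd.sd.carrier := downTop W.sd.sd.carrier
  letI : MulAction G W.sd.sd.carrier := W.sd.sd.mulAction
  have e := Fintype.equivFin W.sd.sd.carrier
  refine lt_of_le_of_lt (sInf_le ⟨Fintype.card W.sd.sd.carrier, rfl,
    fun i => {d | ∃ g, d ≤ W.sd.sd.smul g (e.symm i)}, ?_, ?_, ?_, ?_⟩) (ENat.coe_lt_top _)
  · rintro i a ⟨g, hg⟩ b hb
    exact ⟨g, hb.trans hg⟩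
  · rintro i g x ⟨h, hx⟩
    refine ⟨g * h, ?_⟩
    rw [W.sd.sd.smul_mul]
    exact W.sd.sd.smul_mono _ _ _ hx
  · rw [Set.eq_univ_iff_forall]
    intro x
    refine Set.mem_iUnion.2 ⟨e x, 1, ?_⟩
    rw [W.sd.sd.smul_one, e.symm_apply_apply]
  · intro i
    exact main_cat W (e.symm i)

end FinGPoset

/-- Let `G` be a finite group and `X` a finite `T₀` `G`-space. Then the
equivariant Lusternik–Schnirelmann category of `sd^n(X)` is finite for every `n ≥ 2`. -/
theorem LSG_sdIter_lt_top (G : Type) [Group G] [Finite G] (X : FinGPoset G)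
    (n : ℕ) (hn : 2 ≤ n) :
    (FinGPoset.sdIter n X).LSG < ⊤ := by
  obtain ⟨m, rfl⟩ := Nat.exists_eq_add_of_le' hn
  exact FinGPoset.LSG_sd_sd (FinGPoset.sdIter m X)
end

section
/- Let G be a finite group, X a finite T0 G-space, and N = (#X)^{#((X×X)/G)}, where #((X×X)/G) is the number of G-orbits of X×X under the diagonal action. Then CC_G(X) = CC_{G,N}(X): the equivariant combinatorial complexity is realized by combinatorial paths of length N. -/
/-- One step of a zigzag. -/
def zstep {E : Type*} (R : E → E → Prop) (i : ℕ) (x y : E) : Prop :=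
  (i % 2 = 0 → R x y) ∧ (i % 2 = 1 → R y x)

/-- Elements reachable from `a` by a zigzag of length `k`. -/
def zreach {E : Type*} (R : E → E → Prop) (a : E) : ℕ → Set E
  | 0 => {a}
  | k + 1 => {y | ∃ x ∈ zreach R a k, zstep R k x y}

theorem zreach_mono {E : Type*} {R : E → E → Prop} (hr : ∀ x, R x x) (a : E) (k j : ℕ) :
    zreach R a k ⊆ zreach R a (k + j) := by
  induction j with
  | zero => exact subset_rfl
  | succ j ih => exact fun x hx => ⟨x, ih hx, fun _ => hr x, fun _ => hr x⟩

theorem zreach_stable {E : Type*} {R : E → E → Prop}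
    (ht : ∀ x y z, R x y → R y z → R x z) (a : E) (k : ℕ)
    (h : zreach R a (k + 2) ⊆ zreach R a (k + 1)) (j : ℕ) :
    zreach R a (k + 1 + j) ⊆ zreach R a (k + 1) := by
  induction j with
  | zero => exact subset_rfl
  | succ j ih =>
    rintro y ⟨x, hx, hxy⟩
    have hx := ih hx
    have hxy : zstep R (k + 1 + j) x y := hxy
    by_cases hp : (k + 1 + j) % 2 = (k + 1) % 2
    · refine h ⟨x, hx, ?_⟩
      unfold zstep at hxy ⊢
      rwa [hp] at hxy
    · obtain ⟨x', hx', hs⟩ := hx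
      refine ⟨x', hx', fun h0 => ht _ _ _ (hs.1 h0) (hxy.1 (by omega)),
        fun h0 => ht _ _ _ (hxy.2 (by omega)) (hs.2 h0)⟩

theorem zreach_card {E : Type*} [Finite E] {R : E → E → Prop} (hr : ∀ x, R x x)
    (ht : ∀ x y z, R x y → R y z → R x z) (a : E) (k : ℕ) :
    (∀ j, zreach R a (k + 1 + j) ⊆ zreach R a (k + 1)) ∨ k + 1 ≤ (zreach R a (k + 1)).ncard := by
  induction k with
  | zero =>
    right
    have : 0 < (zreach R a (0 + 1)).ncard :=
      (Set.ncard_pos (Set.toFinite _)).2 ⟨a, zreach_mono hr a 0 1 rfl⟩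
    omega
  | succ k ih =>
    rcases ih with ih | ih
    · left
      intro j
      have h1 := ih (1 + j)
      rw [← add_assoc] at h1
      exact h1.trans (zreach_mono hr a (k + 1) 1)
    · by_cases h : zreach R a (k + 2) ⊆ zreach R a (k + 1)
      · left
        intro j
        have h1 := zreach_stable ht a k h (1 + j)
        rw [← add_assoc] at h1
        exact h1.trans (zreach_mono hr a (k + 1) 1)
      · right
        have := Set.ncard_lt_ncard (s := zreach R a (k + 1)) (t := zreach R a (k + 2))
          ⟨zreach_mono hr a (k + 1) 1, h⟩ (Set.toFinite _)
        show k + 1 + 1 ≤ (zreach R a (k + 2)).ncard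
        omega

theorem zreach_bound {E : Type*} [Finite E] {R : E → E → Prop} (hr : ∀ x, R x x)
    (ht : ∀ x y z, R x y → R y z → R x z) (a : E) (N m : ℕ) (hN : Nat.card E ≤ N) :
    zreach R a m ⊆ zreach R a N := by
  have hpos : 0 < Nat.card E := Nat.card_pos_iff.2 ⟨⟨a⟩, inferInstance⟩
  obtain ⟨k, rfl⟩ : ∃ k, N = k + 1 := ⟨N - 1, by omega⟩
  rcases zreach_card hr ht a k with h | h
  · refine (zreach_mono hr a m (k + 1)).trans ?_
    rw [add_comm]
    exact h m
  · have : zreach R a (k + 1) = Set.univ :=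
      Set.eq_of_subset_of_ncard_le (Set.subset_univ _) (by rw [Set.ncard_univ]; omega)
    rw [this]
    exact Set.subset_univ _

theorem zreach_path {E : Type*} {R : E → E → Prop} (a : E) (k : ℕ) (b : E)
    (h : b ∈ zreach R a k) :
    ∃ c : ℕ → E, c 0 = a ∧ c k = b ∧ ∀ i < k, zstep R i (c i) (c (i + 1)) := by
  induction k generalizing b with
  | zero => exact ⟨fun _ => a, rfl, h.symm, by simp⟩
  | succ k ih =>
    obtain ⟨x, hx, hxb⟩ := h
    obtain ⟨c, h0, hk, hc⟩ := ih x hx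
    refine ⟨fun i => if i ≤ k then c i else b, by simpa using h0, by simp, ?_⟩
    intro i hi
    rcases Nat.lt_succ_iff_lt_or_eq.1 hi with h | rfl
    · have h1 : i ≤ k := by omega
      have h2 : i + 1 ≤ k := by omega
      simpa [h1, h2] using hc i h
    · simpa [hk] using hxb

theorem path_zreach {E : Type*} {R : E → E → Prop} (c : ℕ → E) (m : ℕ)
    (hc : ∀ i < m, zstep R i (c i) (c (i + 1))) (k : ℕ) (hk : k ≤ m) :
    c k ∈ zreach R (c 0) k := by
  induction k with
  | zero => rfl
  | succ k ih => exact ⟨c k, ih (by omega), hc k (by omega)⟩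

theorem eqNavigableJ_card (G X : Type*) [Group G] [Finite G]
    [TopologicalSpace X] [Finite X] [MulAction G X] (m : ℕ) (U : Set (X × X))
    (hU : GInvariant G U) (h : EqNavigableJ G X m U) :
    EqNavigableJ G X (Nat.card X ^ Nat.card (Quotient (MulAction.orbitRel G (X × X)))) U := by
  classical
  obtain ⟨s, hs, hend, heq⟩ := h
  let E := {f : U → X // Continuous f ∧
    ∀ (g : G) (u : U) (h : g • (u : X × X) ∈ U), f ⟨g • (u : X × X), h⟩ = g • f u}
  let R : E → E → Prop := fun f g => ∀ u, f.1 u ⤳ g.1 u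
  have hr : ∀ x, R x x := fun x u => specializes_rfl
  have ht : ∀ x y z, R x y → R y z → R x z := fun x y z h1 h2 u => (h1 u).trans (h2 u)
  set N := Nat.card X ^ Nat.card (Quotient (MulAction.orbitRel G (X × X))) with hN
  have hcard : Nat.card E ≤ N := by
    rw [hN, ← Nat.card_fun]
    refine Nat.card_le_card_of_injective
      (fun (f : E) (q : Quotient (MulAction.orbitRel G (X × X))) =>
        if hq : q.out ∈ U then f.1 ⟨q.out, hq⟩ else q.out.1) ?_
    intro f f' hff
    apply Subtype.ext
    funext u
    let q : Quotient (MulAction.orbitRel G (X × X)) := Quotient.mk _ (u : X × X)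
    obtain ⟨g, hg⟩ : q.out ∈ MulAction.orbit G (u : X × X) :=
      MulAction.orbitRel_apply.1 (Quotient.mk_out (s := MulAction.orbitRel G (X × X)) (u : X × X))
    have hg : g • (u : X × X) = q.out := hg
    have hgu : g • (u : X × X) ∈ U := hU g _ u.2
    have hq : q.out ∈ U := hg ▸ hgu
    have h1 := congrFun hff q
    simp only [hq, dif_pos] at h1
    have e : (⟨q.out, hq⟩ : U) = ⟨g • (u : X × X), hgu⟩ := Subtype.ext hg.symm
    rw [e, f.2.2, f'.2.2] at h1
    exact MulAction.injective g h1
  let idx : ℕ → J m := fun i => (⟨min i m, by omega⟩ : Fin (m + 1))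
  let c : ℕ → E := fun i => ⟨fun u => s u (idx i),
    (continuous_eval_const (F := C(J m, X)) (idx i)).comp hs, fun g u h => heq g u h _⟩
  have hc : ∀ i < m, zstep R i (c i) (c (i + 1)) := by
    intro i hi
    have v1 : (idx i).val = i := by show min i m = i; omega
    have v2 : (idx (i + 1)).val = i + 1 := by show min (i + 1) m = i + 1; omega
    constructor
    · intro h0 u
      refine specializes_iff_forall_open.2 fun V hV hx => ?_
      exact (hV.preimage (s u).continuous) hx (Or.inr ⟨by omega, by omega⟩)
    · intro h0 u
      refine specializes_iff_forall_open.2 fun V hV hx => ?_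
      exact (hV.preimage (s u).continuous) hx (Or.inr ⟨by omega, by omega⟩)
  have hreach := zreach_bound hr ht (c 0) N m hcard (path_zreach c m hc m le_rfl)
  obtain ⟨d, hd0, hdN, hd⟩ := zreach_path _ _ _ hreach
  have hcont : ∀ u : U, Continuous (fun t : J N => (d t.val).1 u) := by
    intro u
    refine ⟨fun V hV => ?_⟩
    intro a ha b hba
    have hav : a.val < N + 1 := Fin.is_lt a
    have hbv : b.val < N + 1 := Fin.is_lt b
    have ha : (d a.val).1 u ∈ V := ha
    show (d b.val).1 u ∈ V
    rcases hba with h | ⟨h0, h | h⟩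
    · rwa [h]
    · have := (hd b.val (by omega)).1 h0 u
      rw [← h] at this
      exact this.mem_open hV ha
    · have := (hd a.val (by omega)).2 (by omega) u
      rw [← h] at this
      exact this.mem_open hV ha
  refine ⟨fun u => ⟨fun t => (d t.val).1 u, hcont u⟩, ?_, ?_, ?_⟩
  · refine ContinuousMap.continuous_compactOpen.2 fun K _ V hV => ?_
    have : {u : U | Set.MapsTo (fun t : J N => (d t.val).1 u) K V} =
        ⋂ t ∈ K, (d t.val).1 ⁻¹' V := by
      ext u
      simp [Set.MapsTo]
    have hfin : Finite (J N) := inferInstanceAs (Finite (Fin (N + 1)))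
    show IsOpen {u : U | Set.MapsTo (fun t : J N => (d t.val).1 u) K V}
    rw [this]
    exact (Set.toFinite K).isOpen_biInter fun t _ => hV.preimage (d t.val).2.1
  · intro u
    constructor
    · show (d 0).1 u = _
      rw [hd0, ← (hend u).1]
      show s u (idx 0) = _
      exact congrArg (s u) (Fin.ext (by show min 0 m = 0; omega))
    · show (d N).1 u = _
      rw [hdN, ← (hend u).2]
      show s u (idx m) = _
      congr 1
      exact Fin.ext (by show min m m = m; omega)
  · intro g u h t
    exact (d t.val).2.2 g u h

/-- For a finite `T₀` `G`-space `X`, letting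
`N = (#X)^(#((X×X)/G))` (the cardinality of `X` raised to the number of `G`-orbits of
`X × X` under the diagonal action), the equivariant combinatorial complexity is realized by
combinatorial paths of length `N`: `CC_G(X) = CC_{G,N}(X)`. -/
theorem eqCC_eq_eqCCm_card (G X : Type*) [Group G] [Finite G]
    [TopologicalSpace X] [Finite X] [T0Space X]
    [MulAction G X] [ContinuousConstSMul G X] :
    eqCC G X =
      eqCCm G X (Nat.card X ^ Nat.card (Quotient (MulAction.orbitRel G (X × X)))) := by
  classical
  apply le_antisymm
  · have hpos : 0 < Nat.card X ^ Nat.card (Quotient (MulAction.orbitRel G (X × X))) := by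
      rcases isEmpty_or_nonempty X with h | h
      · have : IsEmpty (Quotient (MulAction.orbitRel G (X × X))) :=
          ⟨fun q => h.elim q.out.1⟩
        simp
      · exact pow_pos Nat.card_pos _
    obtain ⟨k, hk⟩ := Nat.exists_eq_succ_of_ne_zero hpos.ne'
    rw [hk]
    exact iInf_le _ k
  · refine le_iInf fun m => sInf_le_sInf ?_
    rintro k ⟨n, rfl, U, h1, h2, h3, h4⟩
    exact ⟨n, rfl, U, h1, h2, h3, fun i => eqNavigableJ_card G X _ _ (h2 i) (h4 i)⟩
end

section
/- Let X be a path-connected finite topological space with n = #X points, and let x, y ∈ X. Then there is a combinatorial path of length n from x to y, i.e. a continuous map α: J_n → X with α(0) = x and α(n) = y. -/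
def zzStep {X : Type*} [TopologicalSpace X] (i : ℕ) (a b : X) : Prop :=
  (i % 2 = 0 → a ⤳ b) ∧ (i % 2 = 1 → b ⤳ a)

def zzR {X : Type*} [TopologicalSpace X] (x : X) : ℕ → Set X
  | 0 => {x}
  | k + 1 => {z | ∃ w ∈ zzR x k, zzStep k w z}

theorem zzStep_refl {X : Type*} [TopologicalSpace X] (i : ℕ) (a : X) : zzStep i a a :=
  ⟨fun _ => specializes_rfl, fun _ => specializes_rfl⟩

theorem zzStep_trans {X : Type*} [TopologicalSpace X] {i : ℕ} {a b c : X}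
    (h : zzStep i a b) (h' : zzStep i b c) : zzStep i a c :=
  ⟨fun e => (h.1 e).trans (h'.1 e), fun e => (h'.2 e).trans (h.2 e)⟩

theorem zzR_sub {X : Type*} [TopologicalSpace X] (x : X) (k : ℕ) : zzR x k ⊆ zzR x (k + 1) :=
  fun z hz => ⟨z, hz, zzStep_refl k z⟩

theorem zzR_mem {X : Type*} [TopologicalSpace X] (x : X) (k : ℕ) : x ∈ zzR x k := by
  induction k with
  | zero => exact rfl
  | succ k ih => exact zzR_sub x k ih

theorem zzR_stop {X : Type*} [TopologicalSpace X] [Finite X] [PreconnectedSpace X] (x : X) (k : ℕ)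
    (h : zzR x (k + 2) ⊆ zzR x (k + 1)) : zzR x (k + 1) = Set.univ := by
  have h1 : ∀ w ∈ zzR x (k + 1), ∀ z, zzStep k w z → z ∈ zzR x (k + 1) := by
    rintro w ⟨v, hv, hvw⟩ z hz
    exact ⟨v, hv, zzStep_trans hvw hz⟩
  have h2 : ∀ w ∈ zzR x (k + 1), ∀ z, zzStep (k + 1) w z → z ∈ zzR x (k + 1) :=
    fun w hw z hz => h ⟨w, hw, hz⟩
  have up : ∀ w ∈ zzR x (k + 1), ∀ z, w ⤳ z → z ∈ zzR x (k + 1) := by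
    intro w hw z hz
    rcases Nat.mod_two_eq_zero_or_one k with e | e
    · exact h1 w hw z ⟨fun _ => hz, fun _ => by omega⟩
    · exact h2 w hw z ⟨fun _ => hz, fun _ => by omega⟩
  have dn : ∀ w ∈ zzR x (k + 1), ∀ z, z ⤳ w → z ∈ zzR x (k + 1) := by
    intro w hw z hz
    rcases Nat.mod_two_eq_zero_or_one k with e | e
    · exact h2 w hw z ⟨fun _ => by omega, fun _ => hz⟩
    · exact h1 w hw z ⟨fun _ => by omega, fun _ => hz⟩
  have hc : IsClopen (zzR x (k + 1)) := by
    constructor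
    · rw [← isOpen_compl_iff, isOpen_iff_forall_specializes]
      exact fun a b hab hb ha => hb (up a ha b hab)
    · rw [isOpen_iff_forall_specializes]
      exact fun a b hab hb => dn b hb a hab
  exact hc.eq_univ ⟨x, zzR_mem x _⟩

theorem zzR_card {X : Type*} [TopologicalSpace X] [Finite X] [PreconnectedSpace X] (x : X) (k : ℕ) :
    zzR x (k + 1) = Set.univ ∨ k + 1 ≤ (zzR x (k + 1)).ncard := by
  induction k with
  | zero =>
    right
    exact (Set.ncard_pos (Set.toFinite _)).2 ⟨x, zzR_mem x _⟩
  | succ k ih =>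
    by_cases hs : zzR x (k + 2) ⊆ zzR x (k + 1)
    · left
      have := zzR_sub x (k + 1)
      rw [zzR_stop x k hs] at this
      exact Set.univ_subset_iff.1 this
    · rcases ih with ih | ih
      · exact absurd (ih ▸ Set.subset_univ _) hs
      · right
        have := Set.ncard_lt_ncard (ssubset_of_subset_not_subset (zzR_sub x (k + 1)) hs)
          (Set.toFinite _)
        show k + 1 + 1 ≤ (zzR x (k + 1 + 1)).ncard
        omega

theorem zzR_path {X : Type*} [TopologicalSpace X] (x : X) (k : ℕ) : ∀ z ∈ zzR x k,
    ∃ f : ℕ → X, f 0 = x ∧ f k = z ∧ ∀ i < k, zzStep i (f i) (f (i + 1)) := by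
  induction k with
  | zero => exact fun z hz => ⟨fun _ => x, rfl, hz.symm, by simp⟩
  | succ k ih =>
    rintro z ⟨w, hw, hs⟩
    obtain ⟨f, h0, hk, hf⟩ := ih w hw
    refine ⟨fun i => if i ≤ k then f i else z, by simp [h0], by simp, fun i hi => ?_⟩
    rcases Nat.lt_succ_iff_lt_or_eq.1 hi with h | rfl
    · have a : i ≤ k := h.le
      have b : i + 1 ≤ k := h
      simpa [a, b] using hf i h
    · simpa [hk] using hs

/-- Let `X` be a path-connected finite topological space with `n = #X`
points. Then any two points `x, y ∈ X` are joined by a combinatorial path of length `n`,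
i.e. a continuous map `α : J n → X` with `α 0 = x` and `α n = y`. -/
theorem exists_combinatorial_path (X : Type*) [TopologicalSpace X] [Finite X]
    [PathConnectedSpace X] (x y : X) :
    ∃ α : C(J (Nat.card X), X), α (J.zero (Nat.card X)) = x ∧ α (J.last (Nat.card X)) = y := by
  have hu : zzR x (Nat.card X) = Set.univ := by
    have : Nonempty X := ⟨x⟩
    obtain ⟨k, hk⟩ : ∃ k, Nat.card X = k + 1 := Nat.exists_eq_succ_of_ne_zero Nat.card_pos.ne'
    rw [hk]
    rcases zzR_card x k with h | h
    · exact h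
    · apply Set.eq_of_subset_of_ncard_le (Set.subset_univ _) _ (Set.toFinite _)
      rw [Set.ncard_univ, hk]
      exact h
  obtain ⟨f, h0, hk, hf⟩ := zzR_path x (Nat.card X) y (hu ▸ Set.mem_univ y)
  refine ⟨⟨fun i => f (J.val i), ⟨fun U hU => ?_⟩⟩, h0, hk⟩
  intro a ha b hba
  have la : J.val a < Nat.card X + 1 := Fin.isLt a
  have lb : J.val b < Nat.card X + 1 := Fin.isLt b
  change f (J.val b) ∈ U
  change f (J.val a) ∈ U at ha
  rcases hba with h | ⟨he, h | h⟩
  · rwa [h]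
  · have := (hf (J.val b) (by omega)).1 he
    rw [← h] at this
    exact this.mem_open hU ha
  · have := (hf (J.val a) (by omega)).2 (by omega)
    rw [← h] at this
    exact this.mem_open hU ha
end
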